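/- arXiv:1905.01202 — 7 statements merged into one kernel-verified Lean document; each statement's English description precedes it below -/
import Mathlib

section
/- Let X be a Banach space, U an evolution operator on X, P a family of projectors compatible with U with complementary family Q, V the associated map with U(t,s)V(t,s)Q(t)x = Q(t)x and V(t,s)U(t,s)Q(s)x = Q(s)x, and h, k growth rates. Then the pair (U,P) has (h,k)-growth if and only if there exists a nondecreasing map M : ℝ₊ → [1,∞) such that for all t ≥ s ≥ 0 and x ∈ X: (hg₁′) h(s)‖U(t,s)P(s)x‖ ≤ M(s)h(t)‖P(s)x‖ and (kg₂′) k(s)‖V(t,s)Q(t)x‖ ≤ M(t)k(t)‖Q(t)x‖. -/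
open Set Filter Real

variable {X : Type*} [NormedAddCommGroup X] [NormedSpace ℝ X] [CompleteSpace X]

/-- `U : Δ → B(X)` is an evolution operator on `X`. -/
def EvolutionOperator (U : ℝ → ℝ → X →L[ℝ] X) : Prop :=
  (∀ t : ℝ, 0 ≤ t → U t t = ContinuousLinearMap.id ℝ X) ∧
  (∀ t s t₀ : ℝ, 0 ≤ t₀ → t₀ ≤ s → s ≤ t → U t t₀ = (U t s).comp (U s t₀))

/-- `P : ℝ₊ → B(X)` is a family of projectors on `X`. -/
def ProjectorFamily (P : ℝ → X →L[ℝ] X) : Prop :=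
  ∀ t : ℝ, 0 ≤ t → (P t).comp (P t) = P t

/-- `P` is invariant for the evolution operator `U`. -/
def InvariantFor (U : ℝ → ℝ → X →L[ℝ] X) (P : ℝ → X →L[ℝ] X) : Prop :=
  ∀ t s : ℝ, 0 ≤ s → s ≤ t → ∀ x : X, U t s (P s x) = P t (U t s x)

/-- `P` is compatible with `U` : it is invariant for `U` and for every `t ≥ s ≥ 0`
the restriction of `U t s` to `Ker P s` is an isomorphism from `Ker P s` onto
`Ker P t` (a bounded bijection between these closed subspaces of the Banach
space `X`, hence an isomorphism). -/
def CompatibleWith (U : ℝ → ℝ → X →L[ℝ] X) (P : ℝ → X →L[ℝ] X) : Prop :=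
  InvariantFor U P ∧
  ∀ t s : ℝ, 0 ≤ s → s ≤ t →
    Set.BijOn (U t s) {x : X | P s x = 0} {x : X | P t x = 0}

/-- a growth rate : a nondecreasing map `ℝ₊ → [1, ∞)` tending to `∞`. -/
def GrowthRate (h : ℝ → ℝ) : Prop :=
  MonotoneOn h (Ici (0 : ℝ)) ∧ (∀ t : ℝ, 0 ≤ t → 1 ≤ h t) ∧ Tendsto h atTop atTop

/-- a nondecreasing map `ℝ₊ → [1, ∞)`. -/
def Nondecr1 (N : ℝ → ℝ) : Prop :=
  MonotoneOn N (Ici (0 : ℝ)) ∧ ∀ t : ℝ, 0 ≤ t → 1 ≤ N t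

/-- the pair `(U, P)` is (nonuniformly) `(h,k)`-dichotomic; here
`Q t x = x - P t x` is the complementary family of projectors. -/
def Dichotomic (U : ℝ → ℝ → X →L[ℝ] X) (P : ℝ → X →L[ℝ] X) (h k : ℝ → ℝ) : Prop :=
  ∃ N : ℝ → ℝ, Nondecr1 N ∧
    ∀ t s : ℝ, 0 ≤ s → s ≤ t → ∀ x : X,
      h t * ‖U t s (P s x)‖ ≤ N s * (h s * ‖P s x‖) ∧
      k t * ‖x - P s x‖ ≤ N t * (k s * ‖U t s (x - P s x)‖)

/-- the pair `(U, P)` has `(h,k)`-growth. -/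
def HasGrowth (U : ℝ → ℝ → X →L[ℝ] X) (P : ℝ → X →L[ℝ] X) (h k : ℝ → ℝ) : Prop :=
  ∃ M : ℝ → ℝ, Nondecr1 M ∧
    ∀ t s : ℝ, 0 ≤ s → s ≤ t → ∀ x : X,
      h s * ‖U t s (P s x)‖ ≤ M s * (h t * ‖P s x‖) ∧
      k s * ‖x - P s x‖ ≤ M t * (k t * ‖U t s (x - P s x)‖)

/-- `f : X → ℝ` is a norm on `X`. -/
def IsNormOn (f : X → ℝ) : Prop :=
  (∀ x : X, 0 ≤ f x) ∧ (∀ x : X, f x = 0 ↔ x = 0) ∧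
  (∀ (a : ℝ) (x : X), f (a • x) = |a| * f x) ∧
  (∀ x y : X, f (x + y) ≤ f x + f y)

/-- a family of norms `{‖·‖_t : t ≥ 0}` compatible with the family of
projectors `P` (with complementary family `Q t x = x - P t x`). -/
def CompatibleNorms (P : ℝ → X →L[ℝ] X) (nn : ℝ → X → ℝ) : Prop :=
  (∀ t : ℝ, 0 ≤ t → IsNormOn (nn t)) ∧
  ∃ N : ℝ → ℝ, Nondecr1 N ∧
    ∀ t : ℝ, 0 ≤ t → ∀ x : X,
      ‖x‖ ≤ nn t x ∧ nn t x ≤ N t * (‖P t x‖ + ‖x - P t x‖)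

/-- Proposition 2.13 : if `P` is compatible with `U` then `(U,P)` has
`(h,k)`-growth iff `(hg₁')` and `(kg₂')` hold for some nondecreasing
`M : ℝ₊ → [1,∞)`. -/
theorem stmt2 (U V : ℝ → ℝ → X →L[ℝ] X) (P : ℝ → X →L[ℝ] X) (h k : ℝ → ℝ)
    (hU : EvolutionOperator U) (hP : ProjectorFamily P) (hC : CompatibleWith U P)
    (hh : GrowthRate h) (hk : GrowthRate k)
    (hv1 : ∀ t s : ℝ, 0 ≤ s → s ≤ t → ∀ x : X, U t s (V t s (x - P t x)) = x - P t x)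
    (hv2 : ∀ t s : ℝ, 0 ≤ s → s ≤ t → ∀ x : X, V t s (U t s (x - P s x)) = x - P s x)
    (hv4 : ∀ t s : ℝ, 0 ≤ s → s ≤ t → ∀ x : X,
      V t s (x - P t x) = V t s (x - P t x) - P s (V t s (x - P t x)))
    :
    HasGrowth U P h k ↔
      ∃ M : ℝ → ℝ, Nondecr1 M ∧
        ∀ t s : ℝ, 0 ≤ s → s ≤ t → ∀ x : X,
          h s * ‖U t s (P s x)‖ ≤ M s * (h t * ‖P s x‖) ∧
          k s * ‖V t s (x - P t x)‖ ≤ M t * (k t * ‖x - P t x‖) := by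
  have hUQ : ∀ t s : ℝ, 0 ≤ s → s ≤ t → ∀ x : X,
      U t s (x - P s x) = U t s x - P t (U t s x) := fun t s hs hst x => by
    rw [map_sub, hC.1 t s hs hst x]
  constructor
  · rintro ⟨M, hM, hg⟩
    refine ⟨M, hM, fun t s hs hst x => ⟨(hg t s hs hst x).1, ?_⟩⟩
    have hy := (hg t s hs hst (V t s (x - P t x))).2
    rwa [← hv4 t s hs hst x, hv1 t s hs hst x] at hy
  · rintro ⟨M, hM, hg⟩
    refine ⟨M, hM, fun t s hs hst x => ⟨(hg t s hs hst x).1, ?_⟩⟩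
    have hy := (hg t s hs hst (U t s x)).2
    rwa [← hUQ t s hs hst x, hv2 t s hs hst x] at hy
end

section
/- Let X be a Banach space, U an evolution operator on X, P a family of projectors compatible with U with complementary family Q, V the associated map, and h, k growth rates. If the pair (U,P) has (h,k)-growth, then the family of norms defined by ‖x‖_t = sup_{τ ≥ t} (h(t)/h(τ))‖U(τ,t)P(t)x‖ + sup_{0 ≤ τ ≤ t} (k(τ)/k(t))‖V(t,τ)Q(t)x‖ is compatible with the family of projectors P; more precisely, each ‖·‖_t is a norm on X and ‖x‖ ≤ ‖x‖_t ≤ M(t)(‖P(t)x‖ + ‖Q(t)x‖) for all t ≥ 0, x ∈ X, where M is the nondecreasing function from the (h,k)-growth property. -/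
open Set Filter Real

variable {X : Type*} [NormedAddCommGroup X] [NormedSpace ℝ X] [CompleteSpace X]

/-- the Lyapunov type family of norms built from the `(h,k)`-growth property:
`‖x‖_t = sup_{τ ≥ t} (h t / h τ)‖U(τ,t)P(t)x‖ + sup_{0 ≤ τ ≤ t} (k τ / k t)‖V(t,τ)Q(t)x‖`. -/
noncomputable def lyapG (U V : ℝ → ℝ → X →L[ℝ] X) (P : ℝ → X →L[ℝ] X)
    (h k : ℝ → ℝ) (t : ℝ) (x : X) : ℝ :=
  (⨆ τ : Ici t, (h t / h (τ : ℝ)) * ‖U (τ : ℝ) t (P t x)‖) +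
  (⨆ τ : Icc (0 : ℝ) t, (k (τ : ℝ) / k t) * ‖V t (τ : ℝ) (x - P t x)‖)

/-- the Lyapunov type family of norms built from the `(h,k)`-dichotomy property:
`|||x|||_t = sup_{τ ≥ t} (h τ / h t)‖U(τ,t)P(t)x‖ + sup_{0 ≤ τ ≤ t} (k t / k τ)‖V(t,τ)Q(t)x‖`. -/
noncomputable def lyapD (U V : ℝ → ℝ → X →L[ℝ] X) (P : ℝ → X →L[ℝ] X)
    (h k : ℝ → ℝ) (t : ℝ) (x : X) : ℝ :=
  (⨆ τ : Ici t, (h (τ : ℝ) / h t) * ‖U (τ : ℝ) t (P t x)‖) +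
  (⨆ τ : Icc (0 : ℝ) t, (k t / k (τ : ℝ)) * ‖V t (τ : ℝ) (x - P t x)‖)

theorem weightedSup_add_le {ι E F : Type*} [Nonempty ι]
    [NormedAddCommGroup E] [NormedSpace ℝ E] [NormedAddCommGroup F] [NormedSpace ℝ F]
    (w : ι → ℝ) (hw : ∀ i, 0 ≤ w i) (A : ι → E →L[ℝ] F)
    (hb : ∀ x, BddAbove (range fun i => w i * ‖A i x‖)) (x y : E) :
    (⨆ i, w i * ‖A i (x + y)‖) ≤ (⨆ i, w i * ‖A i x‖) + ⨆ i, w i * ‖A i y‖ := by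
  refine ciSup_le fun i => ?_
  calc w i * ‖A i (x + y)‖ ≤ w i * (‖A i x‖ + ‖A i y‖) := by
        rw [map_add]
        exact mul_le_mul_of_nonneg_left (norm_add_le _ _) (hw i)
    _ = w i * ‖A i x‖ + w i * ‖A i y‖ := mul_add _ _ _
    _ ≤ _ := add_le_add (le_ciSup (hb x) i) (le_ciSup (hb y) i)

theorem weightedSup_smul {ι E F : Type*}
    [NormedAddCommGroup E] [NormedSpace ℝ E] [NormedAddCommGroup F] [NormedSpace ℝ F]
    (w : ι → ℝ) (A : ι → E →L[ℝ] F) (a : ℝ) (x : E) :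
    (⨆ i, w i * ‖A i (a • x)‖) = |a| * ⨆ i, w i * ‖A i x‖ := by
  rw [Real.mul_iSup_of_nonneg (abs_nonneg a)]
  congr 1
  funext i
  rw [map_smul, norm_smul, Real.norm_eq_abs]
  ring

/-- Example 3.3 : if `(U,P)` has `(h,k)`-growth with nondecreasing function `M`,
then the Lyapunov type family of norms `lyapG` is compatible with `P`: each
`‖·‖_t` is a norm and `‖x‖ ≤ ‖x‖_t ≤ M t (‖P t x‖ + ‖Q t x‖)`. -/
theorem stmt4 (U V : ℝ → ℝ → X →L[ℝ] X) (P : ℝ → X →L[ℝ] X) (h k : ℝ → ℝ)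
    (hU : EvolutionOperator U) (hP : ProjectorFamily P) (hC : CompatibleWith U P)
    (hh : GrowthRate h) (hk : GrowthRate k)
    (hv1 : ∀ t s : ℝ, 0 ≤ s → s ≤ t → ∀ x : X, U t s (V t s (x - P t x)) = x - P t x)
    (hv2 : ∀ t s : ℝ, 0 ≤ s → s ≤ t → ∀ x : X, V t s (U t s (x - P s x)) = x - P s x)
    (hv3 : ∀ t s t₀ : ℝ, 0 ≤ t₀ → t₀ ≤ s → s ≤ t → ∀ x : X,
      V t t₀ (x - P t x) = V s t₀ (V t s (x - P t x)))
    (hv4 : ∀ t s : ℝ, 0 ≤ s → s ≤ t → ∀ x : X,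
      V t s (x - P t x) = V t s (x - P t x) - P s (V t s (x - P t x)))
    (M : ℝ → ℝ) (hM : Nondecr1 M)
    (hgrow : ∀ t s : ℝ, 0 ≤ s → s ≤ t → ∀ x : X,
      h s * ‖U t s (P s x)‖ ≤ M s * (h t * ‖P s x‖) ∧
      k s * ‖x - P s x‖ ≤ M t * (k t * ‖U t s (x - P s x)‖)) :
    (∀ t : ℝ, 0 ≤ t → IsNormOn (lyapG U V P h k t)) ∧
    (∀ t : ℝ, 0 ≤ t → ∀ x : X,
      ‖x‖ ≤ lyapG U V P h k t x ∧
      lyapG U V P h k t x ≤ M t * (‖P t x‖ + ‖x - P t x‖)) := by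
  have hpos : ∀ t, 0 ≤ t → 0 < h t := fun t ht => one_pos.trans_le (hh.2.1 t ht)
  have kpos : ∀ t, 0 ≤ t → 0 < k t := fun t ht => one_pos.trans_le (hk.2.1 t ht)
  have forward_le : ∀ t, 0 ≤ t → ∀ x : X, ∀ τ : Ici t,
      h t / h τ * ‖U τ t (P t x)‖ ≤ M t * ‖P t x‖ := by
    rintro t ht x ⟨τ, hτ⟩
    have hτ0 := hpos τ (ht.trans hτ)
    rw [div_mul_eq_mul_div, div_le_iff₀ hτ0]
    linarith [(hgrow τ t ht hτ x).1]
  have backward_le : ∀ t, 0 ≤ t → ∀ x : X, ∀ τ : Icc (0 : ℝ) t,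
      k τ / k t * ‖V t τ (x - P t x)‖ ≤ M t * ‖x - P t x‖ := by
    rintro t ht x ⟨τ, h0, hτ⟩
    have key := (hgrow t τ h0 hτ (V t τ (x - P t x))).2
    rw [← hv4 t τ h0 hτ x, hv1 t τ h0 hτ x] at key
    rw [div_mul_eq_mul_div, div_le_iff₀ (kpos t ht)]
    linarith
  have forward_bdd : ∀ t, 0 ≤ t → ∀ x : X,
      BddAbove (range fun τ : Ici t => h t / h τ * ‖U τ t (P t x)‖) := fun t ht x =>
    ⟨_, forall_mem_range.2 (forward_le t ht x)⟩
  have backward_bdd : ∀ t, 0 ≤ t → ∀ x : X,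
      BddAbove (range fun τ : Icc (0 : ℝ) t => k τ / k t * ‖V t τ (x - P t x)‖) :=
    fun t ht x => ⟨_, forall_mem_range.2 (backward_le t ht x)⟩
  have bounds : ∀ t : ℝ, 0 ≤ t → ∀ x : X,
      ‖x‖ ≤ lyapG U V P h k t x ∧
      lyapG U V P h k t x ≤ M t * (‖P t x‖ + ‖x - P t x‖) := by
    intro t ht x
    have : Nonempty (Icc (0 : ℝ) t) := ⟨⟨t, ht, le_rfl⟩⟩
    have hV : V t t (x - P t x) = x - P t x := by
      simpa [hU.1 t ht] using hv2 t t ht le_rfl x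
    have forward_ge := le_ciSup (forward_bdd t ht x) ⟨t, le_refl t⟩
    have backward_ge := le_ciSup (backward_bdd t ht x) ⟨t, ht, le_rfl⟩
    simp only [div_self (hpos t ht).ne', hU.1 t ht, ContinuousLinearMap.id_apply, one_mul]
      at forward_ge
    simp only [div_self (kpos t ht).ne', hV, one_mul] at backward_ge
    refine ⟨?_, ?_⟩
    · calc ‖x‖ = ‖P t x + (x - P t x)‖ := by rw [add_sub_cancel]
        _ ≤ ‖P t x‖ + ‖x - P t x‖ := norm_add_le _ _
        _ ≤ _ := add_le_add forward_ge backward_ge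
    · rw [mul_add]
      exact add_le_add (ciSup_le (forward_le t ht x)) (ciSup_le (backward_le t ht x))
  refine ⟨fun t ht => ⟨fun x => (norm_nonneg x).trans (bounds t ht x).1, fun x => ⟨?_, ?_⟩,
    fun a x => ?_, fun x y => ?_⟩, bounds⟩
  · intro hx
    exact norm_le_zero_iff.1 (hx ▸ (bounds t ht x).1)
  · rintro rfl
    simp [lyapG]
  · have forward := weightedSup_smul (fun τ : Ici t => h t / h τ)
      (fun τ => (U τ t).comp (P t)) a x
    have backward := weightedSup_smul (fun τ : Icc (0 : ℝ) t => k τ / k t)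
      (fun τ => (V t τ).comp (ContinuousLinearMap.id ℝ X - P t)) a x
    rw [lyapG, lyapG, mul_add]
    exact congrArg₂ (· + ·) forward backward
  · have : Nonempty (Icc (0 : ℝ) t) := ⟨⟨t, ht, le_rfl⟩⟩
    have forward := weightedSup_add_le (fun τ : Ici t => h t / h τ)
      (fun τ => (div_pos (hpos t ht) (hpos τ (ht.trans τ.2))).le)
      (fun τ => (U τ t).comp (P t)) (forward_bdd t ht) x y
    have backward := weightedSup_add_le (fun τ : Icc (0 : ℝ) t => k τ / k t)
      (fun τ => (div_pos (kpos τ τ.2.1) (kpos t ht)).le)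
      (fun τ => (V t τ).comp (ContinuousLinearMap.id ℝ X - P t)) (backward_bdd t ht) x y
    exact (add_le_add forward backward).trans_eq (add_add_add_comm _ _ _ _)
end

section
/- Let X be a Banach space, U an evolution operator on X, P a family of projectors compatible with U with complementary family Q, V the associated map, and h, k growth rates. If the pair (U,P) is (h,k)-dichotomic, then the family of norms defined by |||x|||_t = sup_{τ ≥ t} (h(τ)/h(t))‖U(τ,t)P(t)x‖ + sup_{0 ≤ τ ≤ t} (k(t)/k(τ))‖V(t,τ)Q(t)x‖ is compatible with the family of projectors P; more precisely, each |||·|||_t is a norm on X and ‖x‖ ≤ |||x|||_t ≤ N(t)(‖P(t)x‖ + ‖Q(t)x‖) for all t ≥ 0, x ∈ X, where N is the nondecreasing function from the (h,k)-dichotomy property. -/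
open Set Filter Real

variable {X : Type*} [NormedAddCommGroup X] [NormedSpace ℝ X] [CompleteSpace X]

/-- A supremum of weighted norms of linear maps is absolutely homogeneous. -/
theorem iSup_weighted_norm_smul {ι : Type*} {E F : Type*} [NormedAddCommGroup E] [NormedSpace ℝ E]
    [NormedAddCommGroup F] [NormedSpace ℝ F] (w : ι → ℝ) (T : ι → E →L[ℝ] F) (a : ℝ) (x : E) :
    (⨆ i, w i * ‖T i (a • x)‖) = |a| * ⨆ i, w i * ‖T i x‖ := by
  rw [Real.mul_iSup_of_nonneg (abs_nonneg a)]
  congr 1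
  funext i
  rw [map_smul, norm_smul, Real.norm_eq_abs]
  ring

/-- A pointwise bounded supremum of weighted norms of linear maps is subadditive. -/
theorem iSup_weighted_norm_add_le {ι : Type*} [Nonempty ι] {E F : Type*} [NormedAddCommGroup E]
    [NormedSpace ℝ E] [NormedAddCommGroup F] [NormedSpace ℝ F] (w : ι → ℝ) (hw : ∀ i, 0 ≤ w i)
    (T : ι → E →L[ℝ] F) (hb : ∀ x, BddAbove (range fun i => w i * ‖T i x‖)) (x y : E) :
    (⨆ i, w i * ‖T i (x + y)‖) ≤ (⨆ i, w i * ‖T i x‖) + ⨆ i, w i * ‖T i y‖ := by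
  refine ciSup_le fun i => ?_
  calc w i * ‖T i (x + y)‖ ≤ w i * (‖T i x‖ + ‖T i y‖) := by
        rw [map_add]
        exact mul_le_mul_of_nonneg_left (norm_add_le _ _) (hw i)
    _ = w i * ‖T i x‖ + w i * ‖T i y‖ := mul_add _ _ _
    _ ≤ _ := add_le_add (le_ciSup (hb x) i) (le_ciSup (hb y) i)

/-- Example 3.5 : if `(U,P)` is `(h,k)`-dichotomic with nondecreasing function
`N`, then the Lyapunov type family of norms `lyapD` is compatible with `P`: each
`|||·|||_t` is a norm and `‖x‖ ≤ |||x|||_t ≤ N t (‖P t x‖ + ‖Q t x‖)`. -/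
theorem stmt5 (U V : ℝ → ℝ → X →L[ℝ] X) (P : ℝ → X →L[ℝ] X) (h k : ℝ → ℝ)
    (hU : EvolutionOperator U) (hP : ProjectorFamily P) (hC : CompatibleWith U P)
    (hh : GrowthRate h) (hk : GrowthRate k)
    (hv1 : ∀ t s : ℝ, 0 ≤ s → s ≤ t → ∀ x : X, U t s (V t s (x - P t x)) = x - P t x)
    (hv2 : ∀ t s : ℝ, 0 ≤ s → s ≤ t → ∀ x : X, V t s (U t s (x - P s x)) = x - P s x)
    (hv3 : ∀ t s t₀ : ℝ, 0 ≤ t₀ → t₀ ≤ s → s ≤ t → ∀ x : X,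
      V t t₀ (x - P t x) = V s t₀ (V t s (x - P t x)))
    (hv4 : ∀ t s : ℝ, 0 ≤ s → s ≤ t → ∀ x : X,
      V t s (x - P t x) = V t s (x - P t x) - P s (V t s (x - P t x)))
    (N : ℝ → ℝ) (hN : Nondecr1 N)
    (hdich : ∀ t s : ℝ, 0 ≤ s → s ≤ t → ∀ x : X,
      h t * ‖U t s (P s x)‖ ≤ N s * (h s * ‖P s x‖) ∧
      k t * ‖x - P s x‖ ≤ N t * (k s * ‖U t s (x - P s x)‖)) :
    (∀ t : ℝ, 0 ≤ t → IsNormOn (lyapD U V P h k t)) ∧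
    (∀ t : ℝ, 0 ≤ t → ∀ x : X,
      ‖x‖ ≤ lyapD U V P h k t x ∧
      lyapD U V P h k t x ≤ N t * (‖P t x‖ + ‖x - P t x‖)) := by
  have hpos : ∀ {g : ℝ → ℝ}, GrowthRate g → ∀ t, 0 ≤ t → 0 < g t :=
    fun hg t ht => zero_lt_one.trans_le (hg.2.1 t ht)
  have hstable : ∀ t, 0 ≤ t → ∀ x (τ : Ici t),
      h τ / h t * ‖U τ t (P t x)‖ ≤ N t * ‖P t x‖ := by
    rintro t ht x ⟨τ, hτ⟩
    rw [div_mul_eq_mul_div, div_le_iff₀ (hpos hh t ht)]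
    linarith [(hdich τ t ht hτ x).1]
  have hunstable : ∀ t, 0 ≤ t → ∀ x (τ : Icc (0 : ℝ) t),
      k t / k τ * ‖V t τ (x - P t x)‖ ≤ N t * ‖x - P t x‖ := by
    rintro t ht x ⟨τ, hτ₀, hτ⟩
    have hd := (hdich t τ hτ₀ hτ (V t τ (x - P t x))).2
    rw [← hv4 t τ hτ₀ hτ x, hv1 t τ hτ₀ hτ x] at hd
    rw [div_mul_eq_mul_div, div_le_iff₀ (hpos hk τ hτ₀)]
    linarith
  have hstable_bdd : ∀ t, 0 ≤ t → ∀ x,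
      BddAbove (range fun τ : Ici t => h τ / h t * ‖U τ t (P t x)‖) :=
    fun t ht x => ⟨_, forall_mem_range.2 (hstable t ht x)⟩
  have hunstable_bdd : ∀ t, 0 ≤ t → ∀ x,
      BddAbove (range fun τ : Icc (0 : ℝ) t => k t / k τ * ‖V t τ (x - P t x)‖) :=
    fun t ht x => ⟨_, forall_mem_range.2 (hunstable t ht x)⟩
  have hlower : ∀ t, 0 ≤ t → ∀ x, ‖x‖ ≤ lyapD U V P h k t x := by
    intro t ht x
    have hp := le_ciSup (hstable_bdd t ht x) ⟨t, le_refl t⟩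
    have hq := le_ciSup (hunstable_bdd t ht x) ⟨t, ht, le_rfl⟩
    have hV := hv1 t t ht le_rfl x
    simp only [hU.1 t ht, ContinuousLinearMap.id_apply] at hp hV
    simp only [hV] at hq
    rw [div_self (hpos hh t ht).ne', one_mul] at hp
    rw [div_self (hpos hk t ht).ne', one_mul] at hq
    calc ‖x‖ = ‖P t x + (x - P t x)‖ := by rw [add_sub_cancel]
      _ ≤ ‖P t x‖ + ‖x - P t x‖ := norm_add_le _ _
      _ ≤ _ := add_le_add hp hq
  have hupper : ∀ t, 0 ≤ t → ∀ x,
      lyapD U V P h k t x ≤ N t * (‖P t x‖ + ‖x - P t x‖) := by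
    intro t ht x
    have : Nonempty (Icc (0 : ℝ) t) := ⟨⟨t, ht, le_rfl⟩⟩
    rw [mul_add]
    exact add_le_add (ciSup_le (hstable t ht x)) (ciSup_le (hunstable t ht x))
  refine ⟨fun t ht => ⟨fun x => (norm_nonneg x).trans (hlower t ht x), fun x => ⟨fun hx => ?_, ?_⟩,
    fun a x => ?_, fun x y => ?_⟩, fun t ht x => ⟨hlower t ht x, hupper t ht x⟩⟩
  · exact norm_le_zero_iff.1 ((hlower t ht x).trans_eq hx)
  · rintro rfl
    refine le_antisymm ?_ ((norm_nonneg _).trans (hlower t ht 0))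
    simpa using hupper t ht 0
  · have hp := iSup_weighted_norm_smul (fun τ : Ici t => h τ / h t)
      (fun τ => (U τ t).comp (P t)) a x
    have hq := iSup_weighted_norm_smul (fun τ : Icc (0 : ℝ) t => k t / k τ)
      (fun τ => (V t τ).comp (ContinuousLinearMap.id ℝ X - P t)) a x
    exact (congrArg₂ (· + ·) hp hq).trans (mul_add _ _ _).symm
  · have : Nonempty (Icc (0 : ℝ) t) := ⟨⟨t, ht, le_rfl⟩⟩
    have hp := iSup_weighted_norm_add_le (fun τ : Ici t => h τ / h t)
      (fun τ => div_nonneg (hpos hh τ (ht.trans τ.2)).le (hpos hh t ht).le)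
      (fun τ => (U τ t).comp (P t)) (hstable_bdd t ht) x y
    have hq := iSup_weighted_norm_add_le (fun τ : Icc (0 : ℝ) t => k t / k τ)
      (fun τ => div_nonneg (hpos hk t ht).le (hpos hk τ τ.2.1).le)
      (fun τ => (V t τ).comp (ContinuousLinearMap.id ℝ X - P t)) (hunstable_bdd t ht) x y
    exact (add_le_add hp hq).trans_eq (add_add_add_comm _ _ _ _)
end

section
/- Let X be a Banach space, U an evolution operator on X, P a family of projectors compatible with U with complementary family Q, V the associated map, and h, k growth rates. Then the pair (U,P) is (h,k)-dichotomic if and only if there exists a family of norms {|||·|||_t : t ≥ 0} compatible with P such that for all t ≥ s ≥ 0 and x ∈ X: (hd₁″) h(t)|||U(t,s)P(s)x|||_t ≤ h(s)|||P(s)x|||_s and (kd₂″) k(t)|||V(t,s)Q(t)x|||_s ≤ k(s)|||Q(t)x|||_t. -/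
open Set Filter Real

variable {X : Type*} [NormedAddCommGroup X] [NormedSpace ℝ X] [CompleteSpace X]

/-- A pointwise bounded family of operators has a supremum seminorm. -/
theorem exists_seminorm_isLUB_norm {E ι : Type*} [NormedAddCommGroup E] [NormedSpace ℝ E]
    [Nonempty ι] (T : ι → E →L[ℝ] E) (hT : ∀ x, ∃ b, ∀ i, ‖T i x‖ ≤ b) :
    ∃ p : Seminorm ℝ E, ∀ x, IsLUB (range fun i => ‖T i x‖) (p x) := by
  have hpt : ∀ x, BddAbove (range fun i => ‖T i x‖) := fun x => by
    obtain ⟨b, hb⟩ := hT x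
    exact ⟨b, by rintro _ ⟨i, rfl⟩; exact hb i⟩
  have hbdd : BddAbove (range fun i => (normSeminorm ℝ E).comp (T i : E →ₗ[ℝ] E)) :=
    Seminorm.bddAbove_range_iff.2 hpt
  refine ⟨⨆ i, (normSeminorm ℝ E).comp (T i : E →ₗ[ℝ] E), fun x => ?_⟩
  rw [Seminorm.iSup_apply hbdd]
  exact isLUB_ciSup (hpt x)

/-- A sum of scaled seminorms dominating the norm is a norm. -/
theorem isNormOn_of_norm_le {E : Type*} [NormedAddCommGroup E] [NormedSpace ℝ E]
    (p q : Seminorm ℝ E) {a b : ℝ} (ha : 0 ≤ a) (hb : 0 ≤ b)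
    (hle : ∀ x, ‖x‖ ≤ a * p x + b * q x) : IsNormOn fun x => a * p x + b * q x := by
  refine ⟨fun x => (norm_nonneg x).trans (hle x), fun x => ⟨fun hx => ?_, ?_⟩, fun c x => ?_,
    fun x y => ?_⟩
  · exact norm_le_zero_iff.1 ((hle x).trans_eq hx)
  · rintro rfl
    simp
  · simp only [map_smul_eq_mul, Real.norm_eq_abs]
    ring
  · nlinarith [mul_le_mul_of_nonneg_left (map_add_le_add p x y) ha,
      mul_le_mul_of_nonneg_left (map_add_le_add q x y) hb]

/-- Theorem 3.7 : `(U,P)` is `(h,k)`-dichotomic iff there exists a family of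
norms compatible with `P` satisfying `(hd₁'')` and `(kd₂'')`. -/
theorem stmt6 (U V : ℝ → ℝ → X →L[ℝ] X) (P : ℝ → X →L[ℝ] X) (h k : ℝ → ℝ)
    (hU : EvolutionOperator U) (hP : ProjectorFamily P) (hC : CompatibleWith U P)
    (hh : GrowthRate h) (hk : GrowthRate k)
    (hv1 : ∀ t s : ℝ, 0 ≤ s → s ≤ t → ∀ x : X, U t s (V t s (x - P t x)) = x - P t x)
    (hv2 : ∀ t s : ℝ, 0 ≤ s → s ≤ t → ∀ x : X, V t s (U t s (x - P s x)) = x - P s x)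
    (hv3 : ∀ t s t₀ : ℝ, 0 ≤ t₀ → t₀ ≤ s → s ≤ t → ∀ x : X,
      V t t₀ (x - P t x) = V s t₀ (V t s (x - P t x)))
    (hv4 : ∀ t s : ℝ, 0 ≤ s → s ≤ t → ∀ x : X,
      V t s (x - P t x) = V t s (x - P t x) - P s (V t s (x - P t x)))
    :
    Dichotomic U P h k ↔
      ∃ nn : ℝ → X → ℝ, CompatibleNorms P nn ∧
        ∀ t s : ℝ, 0 ≤ s → s ≤ t → ∀ x : X,
          h t * nn t (U t s (P s x)) ≤ h s * nn s (P s x) ∧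
          k t * nn s (V t s (x - P t x)) ≤ k s * nn t (x - P t x) := by
  have hh0 : ∀ t, 0 ≤ t → 0 < h t := fun t ht => one_pos.trans_le (hh.2.1 t ht)
  have hk0 : ∀ t, 0 ≤ t → 0 < k t := fun t ht => one_pos.trans_le (hk.2.1 t ht)
  have hPP : ∀ t, 0 ≤ t → ∀ x, P t (P t x) = P t x := fun t ht x =>
    DFunLike.congr_fun (hP t ht) x
  constructor
  · rintro ⟨N, hN, hd⟩
    have hVbound : ∀ t r, 0 ≤ r → r ≤ t → ∀ x,
        (k r)⁻¹ * ‖V t r (x - P t x)‖ ≤ (k t)⁻¹ * (N t * ‖x - P t x‖) := by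
      intro t r hr hrt x
      have hbd := (hd t r hr hrt (V t r (x - P t x))).2
      rw [← hv4 t r hr hrt, hv1 t r hr hrt] at hbd
      rw [inv_mul_le_iff₀ (hk0 r hr), mul_left_comm, le_inv_mul_iff₀ (hk0 t (hr.trans hrt))]
      linarith
    have hA : ∀ t : ℝ, ∃ p : Seminorm ℝ X, 0 ≤ t →
        ∀ x, IsLUB (range fun τ : Ici t => ‖(h τ • (U τ t).comp (P t)) x‖) (p x) := by
      intro t
      by_cases ht : 0 ≤ t
      · obtain ⟨p, hp⟩ := exists_seminorm_isLUB_norm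
          (fun τ : Ici t => h τ • (U τ t).comp (P t)) fun x => ⟨N t * (h t * ‖P t x‖), fun τ => by
            simpa [norm_smul, abs_of_pos (hh0 τ (ht.trans τ.2))] using (hd τ t ht τ.2 x).1⟩
        exact ⟨p, fun _ => hp⟩
      · exact ⟨0, fun h0 => absurd h0 ht⟩
    have hB : ∀ t : ℝ, ∃ q : Seminorm ℝ X, 0 ≤ t →
        ∀ x, IsLUB (range fun r : Icc 0 t =>
          ‖((k r)⁻¹ • (V t r).comp (ContinuousLinearMap.id ℝ X - P t)) x‖) (q x) := by
      intro t
      by_cases ht : 0 ≤ t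
      · have : Nonempty (Icc 0 t) := ⟨⟨0, le_rfl, ht⟩⟩
        obtain ⟨q, hq⟩ := exists_seminorm_isLUB_norm
          (fun r : Icc 0 t => (k r)⁻¹ • (V t r).comp (ContinuousLinearMap.id ℝ X - P t))
          fun x => ⟨(k t)⁻¹ * (N t * ‖x - P t x‖), fun r => by
            simpa only [smul_apply, ContinuousLinearMap.comp_apply,
              sub_apply, ContinuousLinearMap.id_apply, norm_smul, norm_inv,
              Real.norm_eq_abs, abs_of_pos (hk0 r r.2.1)] using hVbound t r r.2.1 r.2.2 x⟩
        exact ⟨q, fun _ => hq⟩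
      · exact ⟨0, fun h0 => absurd h0 ht⟩
    choose A hA using hA
    choose B hB using hB
    have hAle : ∀ t τ, 0 ≤ t → t ≤ τ → ∀ x, h τ * ‖U τ t (P t x)‖ ≤ A t x := by
      intro t τ ht htτ x
      have hmem := (hA t ht x).1 ⟨⟨τ, htτ⟩, rfl⟩
      simpa [norm_smul, abs_of_pos (hh0 τ (ht.trans htτ))] using hmem
    have hAlub : ∀ t, 0 ≤ t → ∀ x b, (∀ τ, t ≤ τ → h τ * ‖U τ t (P t x)‖ ≤ b) → A t x ≤ b := by
      intro t ht x b hb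
      refine (hA t ht x).2 ?_
      rintro _ ⟨τ, rfl⟩
      simpa [norm_smul, abs_of_pos (hh0 τ (ht.trans τ.2))] using hb τ τ.2
    have hBle : ∀ t r, 0 ≤ r → r ≤ t → ∀ x, (k r)⁻¹ * ‖V t r (x - P t x)‖ ≤ B t x := by
      intro t r hr hrt x
      have hmem := (hB t (hr.trans hrt) x).1 ⟨⟨r, hr, hrt⟩, rfl⟩
      simpa only [smul_apply, ContinuousLinearMap.comp_apply,
        sub_apply, ContinuousLinearMap.id_apply, norm_smul, norm_inv,
        Real.norm_eq_abs, abs_of_pos (hk0 r hr)] using hmem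
    have hBlub : ∀ t, 0 ≤ t → ∀ x b,
        (∀ r, 0 ≤ r → r ≤ t → (k r)⁻¹ * ‖V t r (x - P t x)‖ ≤ b) → B t x ≤ b := by
      intro t ht x b hb
      refine (hB t ht x).2 ?_
      rintro _ ⟨r, rfl⟩
      simpa only [smul_apply, ContinuousLinearMap.comp_apply,
        sub_apply, ContinuousLinearMap.id_apply, norm_smul, norm_inv,
        Real.norm_eq_abs, abs_of_pos (hk0 r r.2.1)] using hb r r.2.1 r.2.2
    have hnorm : ∀ t, 0 ≤ t → ∀ x, ‖x‖ ≤ (h t)⁻¹ * A t x + k t * B t x := by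
      intro t ht x
      have hPx : ‖P t x‖ ≤ (h t)⁻¹ * A t x := by
        rw [le_inv_mul_iff₀ (hh0 t ht)]
        simpa [hU.1 t ht] using hAle t t ht le_rfl x
      have hVt : V t t (x - P t x) = x - P t x := by
        simpa [hU.1 t ht] using hv1 t t ht le_rfl x
      have hQx : ‖x - P t x‖ ≤ k t * B t x := by
        rw [← inv_mul_le_iff₀ (hk0 t ht)]
        simpa only [hVt] using hBle t t ht le_rfl x
      calc ‖x‖ = ‖P t x + (x - P t x)‖ := by rw [add_sub_cancel]
        _ ≤ ‖P t x‖ + ‖x - P t x‖ := norm_add_le _ _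
        _ ≤ _ := add_le_add hPx hQx
    refine ⟨fun t x => (h t)⁻¹ * A t x + k t * B t x, ⟨fun t ht => ?_, N, hN, fun t ht x =>
      ⟨hnorm t ht x, ?_⟩⟩, fun t s hs hst x => ?_⟩
    · exact isNormOn_of_norm_le _ _ (inv_nonneg.2 (hh0 t ht).le) (hk0 t ht).le (hnorm t ht)
    · have hAx : (h t)⁻¹ * A t x ≤ N t * ‖P t x‖ := by
        rw [inv_mul_le_iff₀ (hh0 t ht), mul_left_comm]
        exact hAlub t ht x _ fun τ hτ => (hd τ t ht hτ x).1
      have hBx : k t * B t x ≤ N t * ‖x - P t x‖ := by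
        rw [← le_inv_mul_iff₀ (hk0 t ht)]
        exact hBlub t ht x _ fun r hr hrt => hVbound t r hr hrt x
      rw [mul_add]
      exact add_le_add hAx hBx
    · have ht := hs.trans hst
      have hPy : P t (U t s (P s x)) = U t s (P s x) := by
        rw [← hC.1 t s hs hst, hPP s hs]
      have hPz : P s (V t s (x - P t x)) = 0 :=
        sub_eq_self.1 (hv4 t s hs hst x).symm
      have hBy : B t (U t s (P s x)) ≤ 0 := hBlub t ht _ _ fun r _ _ => by simp [hPy]
      have hAz : A s (V t s (x - P t x)) ≤ 0 := hAlub s hs _ _ fun τ _ => by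
        rw [hPz, map_zero, norm_zero, mul_zero]
      have hAy : A t (U t s (P s x)) ≤ A s (P s x) := hAlub t ht _ _ fun τ hτ => by
        have hle := hAle s τ hs (hst.trans hτ) (P s x)
        rwa [hPP s hs, hU.2 τ t s hs hst hτ, ContinuousLinearMap.comp_apply,
          ← hPy] at hle
      have hBz : B s (V t s (x - P t x)) ≤ B t (x - P t x) := hBlub s hs _ _ fun r hr hrs => by
        have hle := hBle t r hr (hrs.trans hst) (x - P t x)
        rw [hPz, sub_zero, ← hv3 t s r hr hrs hst]
        rwa [map_sub (P t), hPP t ht, sub_self, sub_zero] at hle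
      dsimp only
      constructor
      · have hBP := mul_nonneg (hk0 s hs).le (apply_nonneg (B s) (P s x))
        have hBt := mul_nonpos_of_nonneg_of_nonpos (hk0 t ht).le hBy
        calc h t * ((h t)⁻¹ * A t (U t s (P s x)) + k t * B t (U t s (P s x)))
            ≤ h t * ((h t)⁻¹ * A t (U t s (P s x))) :=
              mul_le_mul_of_nonneg_left (by linarith) (hh0 t ht).le
          _ = A t (U t s (P s x)) := mul_inv_cancel_left₀ (hh0 t ht).ne' _
          _ ≤ A s (P s x) := hAy
          _ = h s * ((h s)⁻¹ * A s (P s x)) := (mul_inv_cancel_left₀ (hh0 s hs).ne' _).symm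
          _ ≤ _ := mul_le_mul_of_nonneg_left (by linarith) (hh0 s hs).le
      · have hAQ := mul_nonneg (inv_nonneg.2 (hh0 t ht).le) (apply_nonneg (A t) (x - P t x))
        have hAs := mul_nonpos_of_nonneg_of_nonpos (inv_nonneg.2 (hh0 s hs).le) hAz
        calc k t * ((h s)⁻¹ * A s (V t s (x - P t x)) + k s * B s (V t s (x - P t x)))
            ≤ k t * (k s * B t (x - P t x)) :=
              mul_le_mul_of_nonneg_left
                (by linarith [mul_le_mul_of_nonneg_left hBz (hk0 s hs).le]) (hk0 t ht).le
          _ = k s * (k t * B t (x - P t x)) := mul_left_comm _ _ _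
          _ ≤ _ := mul_le_mul_of_nonneg_left (by linarith) (hk0 s hs).le
  · rintro ⟨nn, ⟨-, N, hN, hnn⟩, hd⟩
    refine ⟨N, hN, fun t s hs hst x => ?_⟩
    have ht := hs.trans hst
    constructor
    · have hub := (hnn s hs (P s x)).2
      rw [hPP s hs, sub_self, norm_zero, add_zero] at hub
      calc h t * ‖U t s (P s x)‖ ≤ h t * nn t (U t s (P s x)) :=
            mul_le_mul_of_nonneg_left (hnn t ht _).1 (hh0 t ht).le
        _ ≤ h s * nn s (P s x) := (hd t s hs hst x).1
        _ ≤ h s * (N s * ‖P s x‖) := mul_le_mul_of_nonneg_left hub (hh0 s hs).le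
        _ = N s * (h s * ‖P s x‖) := mul_left_comm _ _ _
    · have hPy : P t (U t s (x - P s x)) = 0 := by
        rw [← hC.1 t s hs hst, map_sub, hPP s hs, sub_self, map_zero]
      have hub := (hnn t ht (U t s (x - P s x))).2
      have hkd := (hd t s hs hst (U t s (x - P s x))).2
      rw [hPy, sub_zero, hv2 t s hs hst] at hkd
      rw [hPy, sub_zero, norm_zero, zero_add] at hub
      calc k t * ‖x - P s x‖ ≤ k t * nn s (x - P s x) :=
            mul_le_mul_of_nonneg_left (hnn s hs _).1 (hk0 t ht).le
        _ ≤ k s * nn t (U t s (x - P s x)) := hkd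
        _ ≤ k s * (N t * ‖U t s (x - P s x)‖) := mul_le_mul_of_nonneg_left hub (hk0 s hs).le
        _ = N t * (k s * ‖U t s (x - P s x)‖) := mul_left_comm _ _ _
end

section
/- Let X be a Banach space, U an evolution operator on X, and P a family of projectors compatible with U with complementary family Q and associated map V. Then (U,P) is exponentially dichotomic (i.e., (h,k)-dichotomic with h(t) = e^{αt}, k(t) = e^{βt} for some α, β > 0) if and only if there exist a family of norms {|||·|||_t : t ≥ 0} compatible with P and positive constants α, β such that for all t ≥ s ≥ 0 and x ∈ X: |||U(t,s)P(s)x|||_t ≤ e^{−α(t−s)}|||P(s)x|||_s and |||V(t,s)Q(t)x|||_s ≤ e^{−β(t−s)}|||Q(t)x|||_t. -/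
open Set Filter Real

variable {X : Type*} [NormedAddCommGroup X] [NormedSpace ℝ X] [CompleteSpace X]

/-- The seminorm `x ↦ ⨆ i, ‖T i x‖` of a pointwise bounded family of operators. -/
noncomputable def operatorSupSeminorm {E ι : Type*} [NormedAddCommGroup E] [NormedSpace ℝ E]
    (T : ι → E →L[ℝ] E) : Seminorm ℝ E :=
  ⨆ i, (normSeminorm ℝ E).comp (T i).toLinearMap

theorem operatorSupSeminorm_apply {E ι : Type*} [NormedAddCommGroup E] [NormedSpace ℝ E]
    {T : ι → E →L[ℝ] E} {C : E → ℝ} (hT : ∀ x i, ‖T i x‖ ≤ C x) (x : E) :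
    operatorSupSeminorm T x = ⨆ i, ‖T i x‖ := by
  have hb : BddAbove (range fun i => (normSeminorm ℝ E).comp (T i).toLinearMap) := by
    rw [Seminorm.bddAbove_range_iff]
    intro y
    exact ⟨C y, by rintro _ ⟨i, rfl⟩; exact hT y i⟩
  rw [operatorSupSeminorm, Seminorm.iSup_apply hb]
  rfl

theorem le_operatorSupSeminorm {E ι : Type*} [NormedAddCommGroup E] [NormedSpace ℝ E]
    {T : ι → E →L[ℝ] E} {C : E → ℝ} (hT : ∀ x i, ‖T i x‖ ≤ C x) (x : E) (i : ι) :
    ‖T i x‖ ≤ operatorSupSeminorm T x := by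
  rw [operatorSupSeminorm_apply hT]
  exact le_ciSup (f := fun i => ‖T i x‖) ⟨C x, by rintro _ ⟨i, rfl⟩; exact hT x i⟩ i

theorem operatorSupSeminorm_le {E ι : Type*} [NormedAddCommGroup E] [NormedSpace ℝ E]
    [Nonempty ι] {T : ι → E →L[ℝ] E} {C : E → ℝ} (hT : ∀ x i, ‖T i x‖ ≤ C x) {x : E} {c : ℝ}
    (hc : ∀ i, ‖T i x‖ ≤ c) : operatorSupSeminorm T x ≤ c := by
  rw [operatorSupSeminorm_apply hT]
  exact ciSup_le hc

/-- The weighted supremum of the forward orbit of the stable component. -/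
noncomputable def stableSeminorm {E : Type*} [NormedAddCommGroup E] [NormedSpace ℝ E]
    (U : ℝ → ℝ → E →L[ℝ] E) (P : ℝ → E →L[ℝ] E) (α t : ℝ) : Seminorm ℝ E :=
  operatorSupSeminorm fun τ : Ici t => Real.exp (α * ((τ : ℝ) - t)) • (U τ t).comp (P t)

/-- The weighted supremum of the backward orbit of the unstable component. -/
noncomputable def unstableSeminorm {E : Type*} [NormedAddCommGroup E] [NormedSpace ℝ E]
    (V : ℝ → ℝ → E →L[ℝ] E) (P : ℝ → E →L[ℝ] E) (β t : ℝ) : Seminorm ℝ E :=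
  operatorSupSeminorm fun r : Icc 0 t =>
    Real.exp (β * (t - (r : ℝ))) • (V t r).comp (ContinuousLinearMap.id ℝ E - P t)

theorem norm_exp_smul {E : Type*} [NormedAddCommGroup E] [NormedSpace ℝ E] (a : ℝ) (x : E) :
    ‖Real.exp a • x‖ = Real.exp a * ‖x‖ := by
  rw [norm_smul, Real.norm_eq_abs, Real.abs_exp]

theorem exp_mul_le_of_exp_mul_le {a t s A B N : ℝ}
    (h : Real.exp (a * t) * A ≤ N * (Real.exp (a * s) * B)) :
    Real.exp (a * (t - s)) * A ≤ N * B := by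
  have e : Real.exp (a * t) = Real.exp (a * s) * Real.exp (a * (t - s)) := by
    rw [← Real.exp_add]; ring_nf
  rw [e] at h
  refine le_of_mul_le_mul_left ?_ (Real.exp_pos (a * s))
  linarith

theorem exp_mul_le_of_le_exp_neg_mul {a t s A B N : ℝ}
    (h : A ≤ Real.exp (-a * (t - s)) * (N * B)) :
    Real.exp (a * t) * A ≤ N * (Real.exp (a * s) * B) := by
  have e : Real.exp (a * s) = Real.exp (a * t) * Real.exp (-a * (t - s)) := by
    rw [← Real.exp_add]; ring_nf
  rw [e]
  calc Real.exp (a * t) * A ≤ Real.exp (a * t) * (Real.exp (-a * (t - s)) * (N * B)) := by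
        gcongr
    _ = _ := by ring

/-- Corollary 3.8 : `(U,P)` is exponentially dichotomic iff there exist a family
of norms compatible with `P` and constants `α, β > 0` satisfying `(ed₁)`, `(ed₂)`. -/
theorem stmt8 (U V : ℝ → ℝ → X →L[ℝ] X) (P : ℝ → X →L[ℝ] X)
    (hU : EvolutionOperator U) (hP : ProjectorFamily P) (hC : CompatibleWith U P)
    (hv1 : ∀ t s : ℝ, 0 ≤ s → s ≤ t → ∀ x : X, U t s (V t s (x - P t x)) = x - P t x)
    (hv2 : ∀ t s : ℝ, 0 ≤ s → s ≤ t → ∀ x : X, V t s (U t s (x - P s x)) = x - P s x)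
    (hv3 : ∀ t s t₀ : ℝ, 0 ≤ t₀ → t₀ ≤ s → s ≤ t → ∀ x : X,
      V t t₀ (x - P t x) = V s t₀ (V t s (x - P t x)))
    (hv4 : ∀ t s : ℝ, 0 ≤ s → s ≤ t → ∀ x : X,
      V t s (x - P t x) = V t s (x - P t x) - P s (V t s (x - P t x)))
    :
    (∃ α β : ℝ, 0 < α ∧ 0 < β ∧
      Dichotomic U P (fun t => Real.exp (α * t)) (fun t => Real.exp (β * t))) ↔
      ∃ nn : ℝ → X → ℝ, CompatibleNorms P nn ∧
        ∃ α β : ℝ, 0 < α ∧ 0 < β ∧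
          ∀ t s : ℝ, 0 ≤ s → s ≤ t → ∀ x : X,
            nn t (U t s (P s x)) ≤ Real.exp (-α * (t - s)) * nn s (P s x) ∧
            nn s (V t s (x - P t x)) ≤ Real.exp (-β * (t - s)) * nn t (x - P t x) := by
  have hPP : ∀ t, 0 ≤ t → ∀ x, P t (P t x) = P t x := fun t ht x =>
    DFunLike.congr_fun (hP t ht) x
  constructor
  · rintro ⟨α, β, hα, hβ, N, hN, hD⟩
    have hA : ∀ t, 0 ≤ t → ∀ x, ∀ τ : Ici t,
        ‖(Real.exp (α * ((τ : ℝ) - t)) • (U τ t).comp (P t)) x‖ ≤ N t * ‖P t x‖ := by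
      intro t ht x τ
      have h := exp_mul_le_of_exp_mul_le (hD τ t ht τ.2 x).1
      simpa [norm_exp_smul] using h
    have hB : ∀ t, 0 ≤ t → ∀ x, ∀ r : Icc 0 t,
        ‖(Real.exp (β * (t - (r : ℝ))) • (V t r).comp (ContinuousLinearMap.id ℝ X - P t)) x‖
          ≤ N t * ‖x - P t x‖ := by
      intro t ht x r
      have h := (hD t r r.2.1 r.2.2 (V t r (x - P t x))).2
      rw [← hv4 t r r.2.1 r.2.2, hv1 t r r.2.1 r.2.2] at h
      have h := exp_mul_le_of_exp_mul_le h
      simpa only [smul_apply, norm_exp_smul,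
        ContinuousLinearMap.comp_apply, sub_apply,
        ContinuousLinearMap.id_apply] using h
    have hlow : ∀ t, 0 ≤ t → ∀ x,
        ‖x‖ ≤ (stableSeminorm U P α t + unstableSeminorm V P β t) x := by
      intro t ht x
      have h₁ := le_operatorSupSeminorm (hA t ht) x ⟨t, le_refl t⟩
      have h₂ := le_operatorSupSeminorm (hB t ht) x ⟨t, ht, le_refl t⟩
      have hV := hv2 t t ht le_rfl x
      rw [hU.1 t ht, ContinuousLinearMap.id_apply] at hV
      simp only [ContinuousLinearMap.comp_apply, sub_apply,
        ContinuousLinearMap.id_apply, hU.1 t ht, hV, sub_self, mul_zero, Real.exp_zero,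
        one_smul] at h₁ h₂
      have h₃ : ‖x‖ ≤ ‖P t x‖ + ‖x - P t x‖ := by
        simpa using norm_add_le (P t x) (x - P t x)
      exact h₃.trans (add_le_add h₁ h₂)
    refine ⟨fun t => ⇑(stableSeminorm U P α t + unstableSeminorm V P β t),
      ⟨fun t ht => ⟨fun x => apply_nonneg _ x, fun x => ⟨fun h => ?_, fun h => ?_⟩,
        fun a x => ?_, fun x y => map_add_le_add _ x y⟩, N, hN, fun t ht x => ⟨hlow t ht x, ?_⟩⟩,
      α, β, hα, hβ, fun t s hs hst x => ?_⟩
    · exact norm_le_zero_iff.1 ((hlow t ht x).trans h.le)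
    · rw [h]; exact map_zero _
    · simpa using map_smul_eq_mul (stableSeminorm U P α t + unstableSeminorm V P β t) a x
    · have : Nonempty (Icc 0 t) := ⟨⟨t, ht, le_refl t⟩⟩
      rw [mul_add]
      exact add_le_add (operatorSupSeminorm_le (hA t ht) (hA t ht x))
        (operatorSupSeminorm_le (hB t ht) (hB t ht x))
    have ht : 0 ≤ t := hs.trans hst
    have : Nonempty (Icc 0 t) := ⟨⟨t, ht, le_refl t⟩⟩
    have : Nonempty (Icc 0 s) := ⟨⟨s, hs, le_refl s⟩⟩
    have hinv : P t (U t s (P s x)) = U t s (P s x) := by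
      rw [← hC.1 t s hs hst, hPP s hs]
    have hPV : P s (V t s (x - P t x)) = 0 := by
      have := hv4 t s hs hst x
      rwa [eq_comm, sub_eq_self] at this
    constructor
    · have hun : unstableSeminorm V P β t (U t s (P s x)) ≤ 0 :=
        operatorSupSeminorm_le (hB t ht) fun r => by simp [hinv]
      have hst' : stableSeminorm U P α t (U t s (P s x)) ≤
          Real.exp (-α * (t - s)) * stableSeminorm U P α s (P s x) := by
        refine operatorSupSeminorm_le (hA t ht) fun τ => ?_
        have h := le_operatorSupSeminorm (hA s hs) (P s x) ⟨τ, hst.trans τ.2⟩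
        refine le_trans (le_of_eq ?_) (mul_le_mul_of_nonneg_left h (Real.exp_pos _).le)
        simp only [smul_apply, norm_exp_smul,
          ContinuousLinearMap.comp_apply, hinv, hPP s hs, hU.2 τ t s hs hst τ.2]
        rw [← mul_assoc, ← Real.exp_add]
        ring_nf
      have hnn : 0 ≤ Real.exp (-α * (t - s)) * unstableSeminorm V P β s (P s x) :=
        mul_nonneg (Real.exp_pos _).le (apply_nonneg _ _)
      simp only [add_apply]
      linarith
    · have hsz : stableSeminorm U P α s (V t s (x - P t x)) ≤ 0 :=
        operatorSupSeminorm_le (hA s hs) fun τ => by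
          simp only [smul_apply, ContinuousLinearMap.comp_apply, hPV,
            map_zero, smul_zero, norm_zero, le_refl]
      have hun : unstableSeminorm V P β s (V t s (x - P t x)) ≤
          Real.exp (-β * (t - s)) * unstableSeminorm V P β t (x - P t x) := by
        refine operatorSupSeminorm_le (hB s hs) fun r => ?_
        have h := le_operatorSupSeminorm (hB t ht) (x - P t x) ⟨r, r.2.1, r.2.2.trans hst⟩
        have hQ : P t (x - P t x) = 0 := by rw [map_sub, hPP t ht, sub_self]
        refine le_trans (le_of_eq ?_) (mul_le_mul_of_nonneg_left h (Real.exp_pos _).le)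
        simp only [smul_apply, norm_exp_smul,
          ContinuousLinearMap.comp_apply, sub_apply,
          ContinuousLinearMap.id_apply, hPV, hQ, sub_zero, hv3 t s r r.2.1 r.2.2 hst x]
        rw [← mul_assoc, ← Real.exp_add]
        ring_nf
      have hnn : 0 ≤ Real.exp (-β * (t - s)) * stableSeminorm U P α t (x - P t x) :=
        mul_nonneg (Real.exp_pos _).le (apply_nonneg _ _)
      simp only [add_apply]
      linarith
  · rintro ⟨nn, ⟨-, N, hN, hnn⟩, α, β, hα, hβ, hD⟩
    refine ⟨α, β, hα, hβ, N, hN, fun t s hs hst x => ⟨?_, ?_⟩⟩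
    · have ht : 0 ≤ t := hs.trans hst
      have hup := (hnn s hs (P s x)).2
      rw [hPP s hs, sub_self, norm_zero, add_zero] at hup
      exact exp_mul_le_of_le_exp_neg_mul <| (hnn t ht _).1.trans <|
        (hD t s hs hst x).1.trans (mul_le_mul_of_nonneg_left hup (Real.exp_pos _).le)
    · have ht : 0 ≤ t := hs.trans hst
      have hPU : P t (U t s (x - P s x)) = 0 := by
        rw [← hC.1 t s hs hst, map_sub, hPP s hs, sub_self, map_zero]
      have hup := (hnn t ht (U t s (x - P s x))).2
      have hV := (hD t s hs hst (U t s (x - P s x))).2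
      rw [hPU, sub_zero, norm_zero, zero_add] at hup
      rw [hPU, sub_zero, hv2 t s hs hst] at hV
      exact exp_mul_le_of_le_exp_neg_mul <| (hnn s hs _).1.trans <|
        hV.trans (mul_le_mul_of_nonneg_left hup (Real.exp_pos _).le)
end

section
/- Let X be a Banach space, U an evolution operator on X, and P a family of projectors compatible with U with complementary family Q and associated map V. Then (U,P) is polynomially dichotomic (i.e., (h,k)-dichotomic with h(t) = (t+1)^α, k(t) = (t+1)^β for some α, β > 0) if and only if there exist a family of norms {|||·|||_t : t ≥ 0} compatible with P and positive constants α, β such that for all t ≥ s ≥ 0 and x ∈ X: (t+1)^α|||U(t,s)P(s)x|||_t ≤ (s+1)^α|||P(s)x|||_s and (t+1)^β|||V(t,s)Q(t)x|||_s ≤ (s+1)^β|||Q(t)x|||_t. -/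
open Set Filter Real

variable {X : Type*} [NormedAddCommGroup X] [NormedSpace ℝ X] [CompleteSpace X]

/-- A pointwise bounded supremum of seminorms `‖A i x‖` is subadditive. -/
theorem iSup_norm_apply_add_le {ι E : Type*} [Nonempty ι] [NormedAddCommGroup E]
    [NormedSpace ℝ E] {A : ι → E →L[ℝ] E}
    (hA : ∀ x, BddAbove (range fun i => ‖A i x‖)) (x y : E) :
    ⨆ i, ‖A i (x + y)‖ ≤ (⨆ i, ‖A i x‖) + ⨆ i, ‖A i y‖ := by
  refine ciSup_le fun i => ?_
  rw [map_add]
  exact (norm_add_le _ _).trans (add_le_add (le_ciSup (hA x) i) (le_ciSup (hA y) i))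

theorem iSup_norm_apply_smul {ι E : Type*} [NormedAddCommGroup E]
    [NormedSpace ℝ E] (A : ι → E →L[ℝ] E) (a : ℝ) (x : E) :
    ⨆ i, ‖A i (a • x)‖ = |a| * ⨆ i, ‖A i x‖ := by
  simp only [map_smul, norm_smul, Real.norm_eq_abs]
  exact (Real.mul_iSup_of_nonneg (abs_nonneg a) _).symm

section

variable {E : Type*} [NormedAddCommGroup E] [NormedSpace ℝ E]

/-- The forward evolution of the stable part from time `t`, rescaled by the rate `h`. -/
noncomputable def stableOrbit (U : ℝ → ℝ → E →L[ℝ] E) (P : ℝ → E →L[ℝ] E) (h : ℝ → ℝ) (t : ℝ)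
    (τ : Ici t) : E →L[ℝ] E :=
  (h τ / h t) • (U τ t).comp (P t)

/-- The backward evolution of the unstable part from time `t`, rescaled by the rate `k`. -/
noncomputable def unstableOrbit (V : ℝ → ℝ → E →L[ℝ] E) (P : ℝ → E →L[ℝ] E) (k : ℝ → ℝ) (t : ℝ)
    (r : Icc 0 t) : E →L[ℝ] E :=
  (k t / k r) • (V t r).comp (ContinuousLinearMap.id ℝ E - P t)

/-- The Lyapunov norm at time `t` adapted to a dichotomy with rates `h` and `k`. -/
noncomputable def lyapunovNorm (U V : ℝ → ℝ → E →L[ℝ] E) (P : ℝ → E →L[ℝ] E) (h k : ℝ → ℝ)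
    (t : ℝ) (x : E) : ℝ :=
  (⨆ τ, ‖stableOrbit U P h t τ x‖) + ⨆ r, ‖unstableOrbit V P k t r x‖

/-- A family of norms in which the evolution contracts along `P` and expands along the
complementary family yields a dichotomy. -/
theorem dichotomic_of_compatibleNorms {U V : ℝ → ℝ → E →L[ℝ] E} {P : ℝ → E →L[ℝ] E}
    {h k : ℝ → ℝ} {nn : ℝ → E → ℝ} (hP : ProjectorFamily P) (hI : InvariantFor U P)
    (hh : ∀ t, 0 ≤ t → 0 < h t) (hk : ∀ t, 0 ≤ t → 0 < k t)
    (hv2 : ∀ t s : ℝ, 0 ≤ s → s ≤ t → ∀ x : E, V t s (U t s (x - P s x)) = x - P s x)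
    (hnn : CompatibleNorms P nn)
    (H : ∀ t s : ℝ, 0 ≤ s → s ≤ t → ∀ x : E,
      h t * nn t (U t s (P s x)) ≤ h s * nn s (P s x) ∧
      k t * nn s (V t s (x - P t x)) ≤ k s * nn t (x - P t x)) :
    Dichotomic U P h k := by
  obtain ⟨-, N, hN, hb⟩ := hnn
  have hPP : ∀ t, 0 ≤ t → ∀ x, P t (P t x) = P t x := fun t ht x =>
    DFunLike.congr_fun (hP t ht) x
  refine ⟨N, hN, fun t s hs hst x => ⟨?_, ?_⟩⟩
  · have ht := hs.trans hst
    calc h t * ‖U t s (P s x)‖ ≤ h t * nn t (U t s (P s x)) :=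
          mul_le_mul_of_nonneg_left (hb t ht _).1 (hh t ht).le
      _ ≤ h s * nn s (P s x) := (H t s hs hst x).1
      _ ≤ h s * (N s * (‖P s (P s x)‖ + ‖P s x - P s (P s x)‖)) :=
          mul_le_mul_of_nonneg_left (hb s hs _).2 (hh s hs).le
      _ = N s * (h s * ‖P s x‖) := by rw [hPP s hs, sub_self, norm_zero]; ring
  · have ht := hs.trans hst
    have hy : P t (U t s (x - P s x)) = 0 := by
      rw [← hI t s hs hst, map_sub, hPP s hs, sub_self, map_zero]
    have H2 := (H t s hs hst (U t s (x - P s x))).2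
    rw [hy, sub_zero, hv2 t s hs hst] at H2
    have hb2 := (hb t ht (U t s (x - P s x))).2
    rw [hy, sub_zero, norm_zero, zero_add] at hb2
    calc k t * ‖x - P s x‖ ≤ k t * nn s (x - P s x) :=
          mul_le_mul_of_nonneg_left (hb s hs _).1 (hk t ht).le
      _ ≤ k s * nn t (U t s (x - P s x)) := H2
      _ ≤ k s * (N t * ‖U t s (x - P s x)‖) :=
          mul_le_mul_of_nonneg_left hb2 (hk s hs).le
      _ = N t * (k s * ‖U t s (x - P s x)‖) := by ring

/-- A dichotomy yields a family of norms, compatible with `P`, in which the evolution contracts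
along `P` and expands along the complementary family. -/
theorem Dichotomic.exists_compatibleNorms {U V : ℝ → ℝ → E →L[ℝ] E} {P : ℝ → E →L[ℝ] E}
    {h k : ℝ → ℝ} (hU : EvolutionOperator U) (hP : ProjectorFamily P) (hI : InvariantFor U P)
    (hh : ∀ t, 0 ≤ t → 0 < h t) (hk : ∀ t, 0 ≤ t → 0 < k t)
    (hv1 : ∀ t s : ℝ, 0 ≤ s → s ≤ t → ∀ x : E, U t s (V t s (x - P t x)) = x - P t x)
    (hv3 : ∀ t s t₀ : ℝ, 0 ≤ t₀ → t₀ ≤ s → s ≤ t → ∀ x : E,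
      V t t₀ (x - P t x) = V s t₀ (V t s (x - P t x)))
    (hv4 : ∀ t s : ℝ, 0 ≤ s → s ≤ t → ∀ x : E,
      V t s (x - P t x) = V t s (x - P t x) - P s (V t s (x - P t x)))
    (hD : Dichotomic U P h k) :
    ∃ nn : ℝ → E → ℝ, CompatibleNorms P nn ∧
      ∀ t s : ℝ, 0 ≤ s → s ≤ t → ∀ x : E,
        h t * nn t (U t s (P s x)) ≤ h s * nn s (P s x) ∧
        k t * nn s (V t s (x - P t x)) ≤ k s * nn t (x - P t x) := by
  obtain ⟨N, hN, hb⟩ := hD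
  have hPP : ∀ t, 0 ≤ t → ∀ x, P t (P t x) = P t x := fun t ht x =>
    DFunLike.congr_fun (hP t ht) x
  have stable_norm : ∀ t, 0 ≤ t → ∀ (τ : Ici t) x,
      ‖stableOrbit U P h t τ x‖ = h τ / h t * ‖U τ t (P t x)‖ := fun t ht τ x => by
    simp [stableOrbit, norm_smul, abs_of_pos (hh t ht), abs_of_pos (hh τ (ht.trans τ.2))]
  have unstable_norm : ∀ t, 0 ≤ t → ∀ (r : Icc 0 t) x,
      ‖unstableOrbit V P k t r x‖ = k t / k r * ‖V t r (x - P t x)‖ := fun t ht r x => by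
    simp [unstableOrbit, norm_smul, abs_of_pos (hk t ht), abs_of_pos (hk r r.2.1)]
  have stable_le : ∀ t, 0 ≤ t → ∀ (τ : Ici t) x,
      ‖stableOrbit U P h t τ x‖ ≤ N t * ‖P t x‖ := fun t ht τ x => by
    rw [stable_norm t ht, div_mul_eq_mul_div, div_le_iff₀ (hh t ht)]
    exact (hb τ t ht τ.2 x).1.trans_eq (by ring)
  have unstable_le : ∀ t, 0 ≤ t → ∀ (r : Icc 0 t) x,
      ‖unstableOrbit V P k t r x‖ ≤ N t * ‖x - P t x‖ := fun t ht r x => by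
    rw [unstable_norm t ht, div_mul_eq_mul_div, div_le_iff₀ (hk r r.2.1)]
    have := (hb t r r.2.1 r.2.2 (V t r (x - P t x))).2
    rw [← hv4 t r r.2.1 r.2.2, hv1 t r r.2.1 r.2.2] at this
    exact this.trans_eq (by ring)
  have stable_bdd : ∀ t, 0 ≤ t → ∀ x, BddAbove (range fun τ => ‖stableOrbit U P h t τ x‖) :=
    fun t ht x => ⟨N t * ‖P t x‖, forall_mem_range.2 fun τ => stable_le t ht τ x⟩
  have unstable_bdd : ∀ t, 0 ≤ t → ∀ x, BddAbove (range fun r => ‖unstableOrbit V P k t r x‖) :=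
    fun t ht x => ⟨N t * ‖x - P t x‖, forall_mem_range.2 fun r => unstable_le t ht r x⟩
  have le_stable : ∀ t, 0 ≤ t → ∀ x, ‖P t x‖ ≤ ⨆ τ, ‖stableOrbit U P h t τ x‖ :=
    fun t ht x => by
      have := le_ciSup (stable_bdd t ht x) ⟨t, self_mem_Ici⟩
      rwa [stable_norm t ht, div_self (hh t ht).ne', one_mul, hU.1 t ht] at this
  have le_unstable : ∀ t, 0 ≤ t → ∀ x, ‖x - P t x‖ ≤ ⨆ r, ‖unstableOrbit V P k t r x‖ :=
    fun t ht x => by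
      have hV := hv1 t t ht le_rfl x
      rw [hU.1 t ht, ContinuousLinearMap.id_apply] at hV
      have := le_ciSup (unstable_bdd t ht x) ⟨t, ht, le_rfl⟩
      rwa [unstable_norm t ht, div_self (hk t ht).ne', one_mul, hV] at this
  have norm_le : ∀ t, 0 ≤ t → ∀ x, ‖x‖ ≤ lyapunovNorm U V P h k t x := fun t ht x =>
    calc ‖x‖ = ‖P t x + (x - P t x)‖ := by rw [add_sub_cancel]
      _ ≤ ‖P t x‖ + ‖x - P t x‖ := norm_add_le _ _
      _ ≤ _ := add_le_add (le_stable t ht x) (le_unstable t ht x)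
  refine ⟨lyapunovNorm U V P h k, ⟨fun t ht => ⟨fun x => (norm_nonneg x).trans (norm_le t ht x),
    fun x => ⟨fun hx => norm_le_zero_iff.1 (hx ▸ norm_le t ht x), ?_⟩, fun a x => ?_,
    fun x y => ?_⟩, N, hN, fun t ht x => ⟨norm_le t ht x, ?_⟩⟩,
    fun t s hs hst x => ⟨?_, ?_⟩⟩
  · rintro rfl
    simp [lyapunovNorm]
  · simp only [lyapunovNorm, iSup_norm_apply_smul, mul_add]
  · have : Nonempty (Icc 0 t) := ⟨⟨t, ht, le_rfl⟩⟩
    have h₁ := iSup_norm_apply_add_le (stable_bdd t ht) x y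
    have h₂ := iSup_norm_apply_add_le (unstable_bdd t ht) x y
    simp only [lyapunovNorm]
    linarith
  · have : Nonempty (Icc 0 t) := ⟨⟨t, ht, le_rfl⟩⟩
    rw [mul_add]
    exact add_le_add (ciSup_le fun τ => stable_le t ht τ x) (ciSup_le fun r => unstable_le t ht r x)
  · have ht := hs.trans hst
    have hfix : P t (U t s (P s x)) = U t s (P s x) := by rw [← hI t s hs hst, hPP s hs]
    have hzero : ∀ r, ‖unstableOrbit V P k t r (U t s (P s x))‖ = 0 := fun r => by
      rw [unstable_norm t ht, hfix, sub_self, map_zero, norm_zero, mul_zero]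
    have hzero' : ∀ r, ‖unstableOrbit V P k s r (P s x)‖ = 0 := fun r => by
      rw [unstable_norm s hs, hPP s hs, sub_self, map_zero, norm_zero, mul_zero]
    simp only [lyapunovNorm, hzero, hzero', Real.iSup_const_zero, add_zero]
    rw [Real.mul_iSup_of_nonneg (hh t ht).le]
    refine ciSup_le fun τ => ?_
    have hτ : s ≤ τ := hst.trans τ.2
    refine le_trans (le_of_eq ?_)
      (mul_le_mul_of_nonneg_left (le_ciSup (stable_bdd s hs (P s x)) ⟨τ, hτ⟩) (hh s hs).le)
    rw [stable_norm t ht, stable_norm s hs, hfix, hPP s hs, hU.2 τ t s hs hst τ.2,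
      ContinuousLinearMap.comp_apply]
    have := (hh t ht).ne'
    have := (hh s hs).ne'
    field_simp
  · have ht := hs.trans hst
    have hker : P s (V t s (x - P t x)) = 0 := sub_eq_self.1 (hv4 t s hs hst x).symm
    have hQ : P t (x - P t x) = 0 := by rw [map_sub, hPP t ht, sub_self]
    have hzero : ∀ τ, ‖stableOrbit U P h s τ (V t s (x - P t x))‖ = 0 := fun τ => by
      rw [stable_norm s hs, hker, map_zero, norm_zero, mul_zero]
    have hzero' : ∀ τ, ‖stableOrbit U P h t τ (x - P t x)‖ = 0 := fun τ => by
      rw [stable_norm t ht, hQ, map_zero, norm_zero, mul_zero]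
    have : Nonempty (Icc 0 s) := ⟨⟨s, hs, le_rfl⟩⟩
    simp only [lyapunovNorm, hzero, hzero', Real.iSup_const_zero, zero_add]
    rw [Real.mul_iSup_of_nonneg (hk t ht).le]
    refine ciSup_le fun r => ?_
    refine le_trans (le_of_eq ?_)
      (mul_le_mul_of_nonneg_left
        (le_ciSup (unstable_bdd t ht (x - P t x)) ⟨r, r.2.1, r.2.2.trans hst⟩) (hk s hs).le)
    rw [unstable_norm s hs, unstable_norm t ht, hker, hQ, sub_zero, sub_zero,
      hv3 t s r r.2.1 r.2.2 hst]
    ring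

end

/-- Corollary 3.9 : `(U,P)` is polynomially dichotomic iff there exist a family
of norms compatible with `P` and constants `α, β > 0` satisfying `(pd₁)`, `(pd₂)`. -/
theorem stmt9 (U V : ℝ → ℝ → X →L[ℝ] X) (P : ℝ → X →L[ℝ] X)
    (hU : EvolutionOperator U) (hP : ProjectorFamily P) (hC : CompatibleWith U P)
    (hv1 : ∀ t s : ℝ, 0 ≤ s → s ≤ t → ∀ x : X, U t s (V t s (x - P t x)) = x - P t x)
    (hv2 : ∀ t s : ℝ, 0 ≤ s → s ≤ t → ∀ x : X, V t s (U t s (x - P s x)) = x - P s x)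
    (hv3 : ∀ t s t₀ : ℝ, 0 ≤ t₀ → t₀ ≤ s → s ≤ t → ∀ x : X,
      V t t₀ (x - P t x) = V s t₀ (V t s (x - P t x)))
    (hv4 : ∀ t s : ℝ, 0 ≤ s → s ≤ t → ∀ x : X,
      V t s (x - P t x) = V t s (x - P t x) - P s (V t s (x - P t x)))
    :
    (∃ α β : ℝ, 0 < α ∧ 0 < β ∧
      Dichotomic U P (fun t => (t + 1) ^ α) (fun t => (t + 1) ^ β)) ↔
      ∃ nn : ℝ → X → ℝ, CompatibleNorms P nn ∧
        ∃ α β : ℝ, 0 < α ∧ 0 < β ∧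
          ∀ t s : ℝ, 0 ≤ s → s ≤ t → ∀ x : X,
            (t + 1) ^ α * nn t (U t s (P s x)) ≤ (s + 1) ^ α * nn s (P s x) ∧
            (t + 1) ^ β * nn s (V t s (x - P t x)) ≤
              (s + 1) ^ β * nn t (x - P t x) := by
  have hpos : ∀ (γ t : ℝ), 0 ≤ t → 0 < (t + 1) ^ γ := fun γ t ht =>
    Real.rpow_pos_of_pos (by linarith) γ
  constructor
  · rintro ⟨α, β, hα, hβ, hD⟩
    obtain ⟨nn, hnn, H⟩ := hD.exists_compatibleNorms hU hP hC.1 (hpos α) (hpos β) hv1 hv3 hv4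
    exact ⟨nn, hnn, α, β, hα, hβ, H⟩
  · rintro ⟨nn, hnn, α, β, hα, hβ, H⟩
    exact ⟨α, β, hα, hβ, dichotomic_of_compatibleNorms hP hC.1 (hpos α) (hpos β) hv2 hnn H⟩
end

section
/- Let X = ℝ, let h, k be growth rates such that h(t)²/((t+1)ln(t+e)) ≥ g(t) for all t ≥ 0 for some growth rate g, let P : ℝ₊ → B(X) be a family of projectors with complementary family Q, and define U(t,s) = (h(t)/h(s))·((s+1)ln(s+e))/((t+1)ln(t+e))·P(s) + (k(s)/k(t))·((s+1)ln(s+e))/((t+1)ln(t+e))·Q(s) for t ≥ s ≥ 0, assuming P is invariant for U. Then the pair (U,P) has (h,k)-growth (with nondecreasing function M(t) = (t+1)ln(t+e)), but if P(s) ≠ 0 for s = 0 then (U,P) is NOT (h,k)-dichotomic. -/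
open Set Filter Real

variable {X : Type*} [NormedAddCommGroup X] [NormedSpace ℝ X] [CompleteSpace X]

theorem one_le_log_add_exp_one {t : ℝ} (ht : 0 ≤ t) : 1 ≤ Real.log (t + Real.exp 1) := by
  rw [Real.le_log_iff_exp_le (by positivity)]
  linarith

/-- The weight `t ↦ (t + 1) ln (t + e)` is nondecreasing with values in `[1, ∞)`. -/
theorem nondecr1_mul_log :
    Nondecr1 fun t : ℝ => (t + 1) * Real.log (t + Real.exp 1) := by
  refine ⟨fun s hs t ht hst => ?_, fun t ht => ?_⟩
  · have hs' : (0 : ℝ) ≤ s := hs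
    have hlog : Real.log (s + Real.exp 1) ≤ Real.log (t + Real.exp 1) :=
      Real.log_le_log (by positivity) (by linarith)
    have := one_le_log_add_exp_one hs'
    exact mul_le_mul (by linarith) hlog (by linarith) (by linarith)
  · exact one_le_mul_of_one_le_of_one_le (by linarith) (one_le_log_add_exp_one ht)

/-- Example 2.16 : on `X = ℝ`, for growth rates `h, k` with
`h(t)² / ((t+1)ln(t+e)) ≥ g(t)` for some growth rate `g`, the evolution operator
`U(t,s) = (h t / h s)·((s+1)ln(s+e))/((t+1)ln(t+e))·P s
        + (k s / k t)·((s+1)ln(s+e))/((t+1)ln(t+e))·Q s`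
(with `P` an invariant family of projectors and `Q = I - P`) has `(h,k)`-growth
with `M t = (t+1)ln(t+e)`, but the pair `(U,P)` is not `(h,k)`-dichotomic
(provided `P 0 ≠ 0`). -/
theorem stmt15 (h k g : ℝ → ℝ)
    (hh : GrowthRate h) (hk : GrowthRate k) (hg : GrowthRate g)
    (hhg : ∀ t : ℝ, 0 ≤ t → g t ≤ h t ^ 2 / ((t + 1) * Real.log (t + Real.exp 1)))
    (P : ℝ → ℝ →L[ℝ] ℝ) (U : ℝ → ℝ → ℝ →L[ℝ] ℝ)
    (hP : ProjectorFamily P)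
    (hUdef : ∀ t s : ℝ, 0 ≤ s → s ≤ t → ∀ x : ℝ,
      U t s x =
        ((h t / h s) * (((s + 1) * Real.log (s + Real.exp 1)) /
          ((t + 1) * Real.log (t + Real.exp 1)))) • P s x +
        ((k s / k t) * (((s + 1) * Real.log (s + Real.exp 1)) /
          ((t + 1) * Real.log (t + Real.exp 1)))) • (x - P s x))
    (hInv : InvariantFor U P) :
    HasGrowth U P h k ∧
    (∀ t s : ℝ, 0 ≤ s → s ≤ t → ∀ x : ℝ,
      h s * ‖U t s (P s x)‖ ≤
        ((s + 1) * Real.log (s + Real.exp 1)) * (h t * ‖P s x‖) ∧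
      k s * ‖x - P s x‖ ≤
        ((t + 1) * Real.log (t + Real.exp 1)) * (k t * ‖U t s (x - P s x)‖)) ∧
    (P 0 ≠ 0 → ¬ Dichotomic U P h k) := by
  obtain ⟨-, hh1, -⟩ := hh
  obtain ⟨-, hk1, -⟩ := hk
  obtain ⟨-, -, hgtop⟩ := hg
  have hM := nondecr1_mul_log
  set a : ℝ → ℝ := fun t => (t + 1) * Real.log (t + Real.exp 1)
  have ha1 : ∀ t, 0 ≤ t → 1 ≤ a t := hM.2
  have hPP : ∀ s, 0 ≤ s → ∀ x, P s (P s x) = P s x := fun s hs x =>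
    DFunLike.congr_fun (hP s hs) x
  have hUP : ∀ t s, 0 ≤ s → s ≤ t → ∀ x,
      ‖U t s (P s x)‖ = h t / h s * (a s / a t) * ‖P s x‖ := by
    intro t s hs hst x
    have := hh1 s hs
    have := hh1 t (hs.trans hst)
    have := ha1 s hs
    have := ha1 t (hs.trans hst)
    have hc : 0 ≤ h t / h s * (a s / a t) := by positivity
    rw [hUdef t s hs hst, hPP s hs, sub_self, smul_zero, add_zero, norm_smul,
      Real.norm_of_nonneg hc]
  have hUQ : ∀ t s, 0 ≤ s → s ≤ t → ∀ x,
      ‖U t s (x - P s x)‖ = k s / k t * (a s / a t) * ‖x - P s x‖ := by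
    intro t s hs hst x
    have := hk1 s hs
    have := hk1 t (hs.trans hst)
    have := ha1 s hs
    have := ha1 t (hs.trans hst)
    have hc : 0 ≤ k s / k t * (a s / a t) := by positivity
    rw [hUdef t s hs hst, map_sub, hPP s hs, sub_self, smul_zero, zero_add, sub_zero,
      norm_smul, Real.norm_of_nonneg hc]
  have growth : ∀ t s : ℝ, 0 ≤ s → s ≤ t → ∀ x : ℝ,
      h s * ‖U t s (P s x)‖ ≤ a s * (h t * ‖P s x‖) ∧
      k s * ‖x - P s x‖ ≤ a t * (k t * ‖U t s (x - P s x)‖) := by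
    intro t s hs hst x
    have hhs := hh1 s hs
    have hht := hh1 t (hs.trans hst)
    have hks := hk1 s hs
    have hkt := hk1 t (hs.trans hst)
    have has := ha1 s hs
    have hat := ha1 t (hs.trans hst)
    rw [hUP t s hs hst, hUQ t s hs hst]
    constructor
    · calc h s * (h t / h s * (a s / a t) * ‖P s x‖)
          = a s * (h t * ‖P s x‖) / a t := by field_simp
        _ ≤ a s * (h t * ‖P s x‖) := div_le_self (by positivity) hat
    · calc k s * ‖x - P s x‖ ≤ a s * (k s * ‖x - P s x‖) :=
            le_mul_of_one_le_left (by positivity) has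
        _ = a t * (k t * (k s / k t * (a s / a t) * ‖x - P s x‖)) := by field_simp
  refine ⟨⟨a, hM, growth⟩, growth, ?_⟩
  rintro hP0 ⟨N, -, hN⟩
  obtain ⟨x, hx⟩ : ∃ x, P 0 x ≠ 0 := by
    by_contra! hzero
    exact hP0 (ContinuousLinearMap.ext hzero)
  have hx' : 0 < ‖P 0 x‖ := norm_pos_iff.mpr hx
  have hh0 := hh1 0 le_rfl
  have ha0 := ha1 0 le_rfl
  obtain ⟨t, hgt, ht⟩ :=
    ((hgtop.eventually_gt_atTop (N 0 * h 0 * h 0 / a 0)).and (eventually_ge_atTop 0)).exists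
  have hat := ha1 t ht
  have hbound := (hN t 0 le_rfl ht x).1
  rw [hUP t 0 le_rfl ht] at hbound
  have hle : h t ^ 2 / a t * (a 0 / h 0) ≤ N 0 * h 0 := by
    refine le_of_mul_le_mul_right ?_ hx'
    calc h t ^ 2 / a t * (a 0 / h 0) * ‖P 0 x‖
        = h t * (h t / h 0 * (a 0 / a t) * ‖P 0 x‖) := by field_simp
      _ ≤ N 0 * (h 0 * ‖P 0 x‖) := hbound
      _ = N 0 * h 0 * ‖P 0 x‖ := by ring
  have hle' : h t ^ 2 / a t ≤ N 0 * h 0 * h 0 / a 0 := by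
    calc h t ^ 2 / a t = h t ^ 2 / a t * (a 0 / h 0) * (h 0 / a 0) := by field_simp
      _ ≤ N 0 * h 0 * (h 0 / a 0) := mul_le_mul_of_nonneg_right hle (by positivity)
      _ = N 0 * h 0 * h 0 / a 0 := by ring
  exact absurd (hgt.trans_le (hhg t ht)) (not_lt.mpr hle')
end
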